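/- arXiv:math/9805120 — 4 statements merged into one kernel-verified Lean document; each statement's English description precedes it below -/
import Mathlib

section
/- Let A be any diagonal N×N complex matrix whose diagonal entries satisfy A_{aa} · A_{a′a′} = 1 for every a. Then A is a quantum orthogonal matrix: R · (A ⊗ A) = (A ⊗ A) · R (where A ⊗ A is the Kronecker product, expressing the RTT relation R₁₂A₁A₂ = A₂A₁R₁₂ for a matrix with numerical entries), and Aᵗ C A = C and A C Aᵗ = C. -/
noncomputable section

open Matrix Kronecker

/-- The integer `2·ρ_a` for the 1-indexed index `a` of `{1,…,N}` (represented by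
`a : Fin N`, whose 1-indexed value is `a.1 + 1`), where
`(ρ_1,…,ρ_N) = (N/2−1, …, 1/2, 0, −1/2, …, −N/2+1)` for `N` odd and
`(N/2−1, …, 1, 0, 0, −1, …, −N/2+1)` for `N` even.  Powers `q^{ρ_a}` are
interpreted as `p^(2·ρ_a)`. -/
def rhoTwo (N : ℕ) (a : Fin N) : ℤ :=
  if 2 * ((a.1 : ℤ) + 1) < (N : ℤ) + 1 then (N : ℤ) - 2 * ((a.1 : ℤ) + 1)
  else if (N : ℤ) + 1 < 2 * ((a.1 : ℤ) + 1) then (N : ℤ) + 2 - 2 * ((a.1 : ℤ) + 1)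
  else 0

/-- The quantum metric `C_{ab} = q^{−ρ_a} δ_{a,b′} = p^{−2ρ_a} δ_{b,a′}`, where the
primed index `a′ = N+1−a` is `Fin.rev a` in the 0-indexed encoding. -/
def qMetric (N : ℕ) (p : ℂ) : Matrix (Fin N) (Fin N) ℂ :=
  Matrix.of fun a b => if b = a.rev then p ^ (-(rhoTwo N a)) else 0

/-- The quantum orthogonal R-matrix, rows and columns indexed by pairs `(a,b)`, with
`q = p²`; its only nonzero entries are those listed in FRT:
`R^{aa}_{aa} = q` (`a ≠ a′`), `R^{aa}_{aa} = 1` (`a = a′`), `R^{aa′}_{aa′} = q⁻¹`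
(`a ≠ a′`), `R^{ab}_{ab} = 1` (`a ≠ b`, `a′ ≠ b`), `R^{ab}_{ba} = q − q⁻¹`
(`a > b`, `a′ ≠ b`), `R^{aa′}_{a′a} = (q − q⁻¹)(1 − q^{ρ_a−ρ_{a′}})` (`a > a′`), and
`R^{aa′}_{bb′} = −(q − q⁻¹) q^{ρ_a−ρ_b}` (`a > b`, `a′ ≠ b`). -/
def qRmat (N : ℕ) (p : ℂ) : Matrix (Fin N × Fin N) (Fin N × Fin N) ℂ :=
  Matrix.of fun x y =>
    if x.1 = x.2 ∧ y.1 = x.1 ∧ y.2 = x.1 then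
      (if x.1 = x.1.rev then 1 else p ^ (2 : ℤ))
    else if x.2 = x.1.rev ∧ x.1 ≠ x.1.rev ∧ y = x then (p ^ (2 : ℤ))⁻¹
    else if x.1 ≠ x.2 ∧ x.1.rev ≠ x.2 ∧ y = x then 1
    else if x.2 < x.1 ∧ x.1.rev ≠ x.2 ∧ y.1 = x.2 ∧ y.2 = x.1 then
      p ^ (2 : ℤ) - (p ^ (2 : ℤ))⁻¹
    else if x.2 = x.1.rev ∧ x.1.rev < x.1 ∧ y.1 = x.1.rev ∧ y.2 = x.1 then
      (p ^ (2 : ℤ) - (p ^ (2 : ℤ))⁻¹) * (1 - p ^ (2 * rhoTwo N x.1))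
    else if x.2 = x.1.rev ∧ y.1 < x.1 ∧ x.1.rev ≠ y.1 ∧ y.2 = y.1.rev then
      -(p ^ (2 : ℤ) - (p ^ (2 : ℤ))⁻¹) * p ^ (rhoTwo N x.1 - rhoTwo N y.1)
    else 0

/-!
Weigh a pair of indices `(a, b)` by `d a * d b`. A nonzero entry of `R` joins a pair to itself, to
its swap, or one pair `(a, a′)` to another `(b, b′)`, so it preserves the weight as soon as
`d a * d a′` does not depend on `a`. Since `A ⊗ A` is the diagonal matrix of weights, it commutes
with `R`. The metric `C` is supported on the pairs `(a, a′)`, so conjugation by `A` multiplies it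
by their common weight.
-/

section DiagonalMatrices

variable {m n α : Type*} [Fintype m] [Fintype n] [DecidableEq m] [DecidableEq n]
  [NonUnitalCommSemiring α]

lemma commute_diagonal_of_ne_zero_imp_eq {M : Matrix n n α} {v : n → α}
    (h : ∀ i j, M i j ≠ 0 → v i = v j) : Commute M (diagonal v) := by
  ext i j
  rw [mul_diagonal, diagonal_mul]
  by_cases hM : M i j = 0
  · rw [hM, zero_mul, mul_zero]
  · rw [h i j hM, mul_comm]

lemma diagonal_mul_mul_diagonal_eq_smul {M : Matrix m n α} {v : m → α} {w : n → α} {c : α}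
    (h : ∀ i j, M i j ≠ 0 → v i * w j = c) : diagonal v * M * diagonal w = c • M := by
  ext i j
  rw [mul_diagonal, diagonal_mul, Matrix.smul_apply, smul_eq_mul, mul_right_comm]
  by_cases hM : M i j = 0
  · rw [hM, mul_zero, mul_zero]
  · rw [h i j hM]

end DiagonalMatrices

section QuantumOrthogonal

variable {N : ℕ} {p : ℂ}

lemma eq_or_eq_swap_or_rev_of_qRmat_ne_zero {x y : Fin N × Fin N} (h : qRmat N p x y ≠ 0) :
    y = x ∨ y = x.swap ∨ x.2 = x.1.rev ∧ y.2 = y.1.rev := by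
  obtain ⟨a, b⟩ := x
  obtain ⟨c, e⟩ := y
  simp only [qRmat, of_apply, Prod.mk.injEq] at h
  simp only [Prod.swap_prod_mk, Prod.mk.injEq]
  split_ifs at h <;> grind

lemma eq_rev_of_qMetric_ne_zero {a b : Fin N} (h : qMetric N p a b ≠ 0) : b = a.rev := by
  by_contra hab
  exact h (if_neg hab)

variable {d : Fin N → ℂ} {c : ℂ}

lemma commute_qRmat_diagonal_kronecker_diagonal (hd : ∀ a, d a * d a.rev = c) :
    Commute (qRmat N p) (diagonal d ⊗ₖ diagonal d) := by
  rw [diagonal_kronecker_diagonal]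
  refine commute_diagonal_of_ne_zero_imp_eq fun x y hR ↦ ?_
  rcases eq_or_eq_swap_or_rev_of_qRmat_ne_zero hR with rfl | rfl | ⟨hx, hy⟩
  · rfl
  · exact mul_comm _ _
  · rw [hx, hy, hd, hd]

lemma diagonal_mul_qMetric_mul_diagonal (hd : ∀ a, d a * d a.rev = c) :
    diagonal d * qMetric N p * diagonal d = c • qMetric N p :=
  diagonal_mul_mul_diagonal_eq_smul fun a b hC ↦ by rw [eq_rev_of_qMetric_ne_zero hC, hd]

end QuantumOrthogonal

theorem diagonal_is_quantum_orthogonal_general (N : ℕ) (p : ℂ) (_hp : p ≠ 0)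
    (d : Fin N → ℂ) (c : ℂ) (hd : ∀ a : Fin N, d a * d a.rev = c) :
    qRmat N p * (diagonal d ⊗ₖ diagonal d) = (diagonal d ⊗ₖ diagonal d) * qRmat N p ∧
    (diagonal d)ᵀ * qMetric N p * diagonal d = c • qMetric N p ∧
    diagonal d * qMetric N p * (diagonal d)ᵀ = c • qMetric N p := by
  rw [diagonal_transpose]
  exact ⟨commute_qRmat_diagonal_kronecker_diagonal hd,
    diagonal_mul_qMetric_mul_diagonal hd, diagonal_mul_qMetric_mul_diagonal hd⟩

/-- Any diagonal N×N complex matrix `A` whose diagonal entries satisfy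
`A_{aa} · A_{a′a′} = 1` for every `a` is a quantum orthogonal matrix:
`R · (A ⊗ A) = (A ⊗ A) · R` (the RTT relation `R₁₂A₁A₂ = A₂A₁R₁₂` for a matrix with
numerical entries, `A ⊗ A` being the Kronecker product), `Aᵗ C A = C`, and
`A C Aᵗ = C`. -/
theorem diagonal_is_quantum_orthogonal (N : ℕ) (hN : 3 ≤ N) (p : ℂ) (hp : p ≠ 0)
    (d : Fin N → ℂ) (hd : ∀ a : Fin N, d a * d a.rev = 1) :
    qRmat N p * (Matrix.diagonal d ⊗ₖ Matrix.diagonal d) =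
      (Matrix.diagonal d ⊗ₖ Matrix.diagonal d) * qRmat N p ∧
    (Matrix.diagonal d)ᵀ * qMetric N p * Matrix.diagonal d = qMetric N p ∧
    Matrix.diagonal d * qMetric N p * (Matrix.diagonal d)ᵀ = qMetric N p := by
  simpa only [one_smul] using diagonal_is_quantum_orthogonal_general N p hp d 1 hd
end
end

section
/- Let N = 2n be even and let D be the N×N matrix equal to the identity except that D_{n,n} = D_{n+1,n+1} = 0 and D_{n,n+1} = D_{n+1,n} = 1 (the matrix exchanging the indices n and n+1). Then: (i) D² = 1_N; (ii) R · (D ⊗ D) = (D ⊗ D) · R (the RTT relation for a matrix with numerical entries); (iii) Dᵗ C D = C and D C Dᵗ = C; (iv) Cᵗ D Cᵗ = D, which (D being real) is the reality condition conj(D) = Cᵗ D Cᵗ ensuring that the involutive automorphism T ↦ D T D⁻¹ commutes with the compact conjugation of SO_q(N). -/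
noncomputable section

open Matrix Kronecker

/-!
A permutation `σ` of the indices that preserves `ρ` automatically commutes with `a ↦ a′`, because
`ρ` determines an index up to exchanging `a` and `a′` when `ρ_a = 0`.  The entries of `C` and `R`
depend on the indices only through equalities, primes, `ρ` and comparisons `a < b`.  A comparison
reads `ρ_b < ρ_a` unless `b = a′` and `ρ_a = 0`, and the only entry of `R` in which such a pair is
compared carries the factor `1 - q^{ρ_a - ρ_{a′}} = 0`.  Hence `C` and `R` are invariant under `σ`,
that is, they commute with its permutation matrix and with its Kronecker square.  The matrix `D` is
the permutation matrix of the transposition of the two indices with `ρ = 0`.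
-/

section PermMatrix

variable {ι κ R : Type*} [DecidableEq ι] [DecidableEq κ]

theorem matrix_swap_apply [Zero R] [One R] (i j a b : ι) :
    Matrix.swap R i j a b =
      if a = i ∧ b = j then 1
      else if a = j ∧ b = i then 1
      else if a = b ∧ a ≠ i ∧ a ≠ j then 1
      else 0 := by
  simp only [Matrix.swap, PEquiv.toMatrix_apply, Equiv.toPEquiv_apply, Option.mem_some_iff,
    Equiv.swap_apply_def]
  grind

theorem permMatrix_kronecker_permMatrix [MulZeroOneClass R] (σ : Equiv.Perm ι)
    (τ : Equiv.Perm κ) :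
    σ.permMatrix R ⊗ₖ τ.permMatrix R = Equiv.Perm.permMatrix R (σ.prodCongr τ) := by
  ext ⟨a, b⟩ ⟨c, d⟩
  simp [PEquiv.toMatrix_apply, ← ite_and, and_comm]

theorem commute_permMatrix_iff [Fintype ι] [NonAssocSemiring R] {σ : Equiv.Perm ι}
    {M : Matrix ι ι R} :
    Commute (σ.permMatrix R) M ↔ M.submatrix σ σ = M := by
  rw [commute_iff_eq, PEquiv.toMatrix_toPEquiv_mul, PEquiv.mul_toMatrix_toPEquiv]
  constructor <;> intro h <;> ext a b
  · simpa using congr_fun₂ h a (σ b)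
  · simpa using congr_fun₂ h a (σ.symm b)

end PermMatrix

section Rho

variable {N : ℕ}

theorem rhoTwo_rev (a : Fin N) : rhoTwo N a.rev = -rhoTwo N a := by
  simp only [rhoTwo, Fin.val_rev]
  split_ifs <;> omega

theorem rhoTwo_eq_rhoTwo_iff {a b : Fin N} :
    rhoTwo N a = rhoTwo N b ↔ a = b ∨ rhoTwo N a = 0 ∧ b = a.rev := by
  simp only [rhoTwo, Fin.ext_iff, Fin.val_rev]
  split_ifs <;> omega

theorem lt_iff_rhoTwo_lt_rhoTwo {a b : Fin N} (h : rhoTwo N a = 0 → b ≠ a.rev) :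
    a < b ↔ rhoTwo N b < rhoTwo N a := by
  simp only [rhoTwo, ne_eq, Fin.ext_iff, Fin.val_rev, Fin.lt_def] at h ⊢
  split_ifs at h ⊢ <;> omega

theorem rhoTwo_two_mul_eq_zero_iff {n : ℕ} {a : Fin (2 * n)} :
    rhoTwo (2 * n) a = 0 ↔ a.1 + 1 = n ∨ a.1 + 1 = n + 1 := by
  simp only [rhoTwo]
  split_ifs <;> omega

variable {σ : Equiv.Perm (Fin N)}

theorem apply_rev_of_rhoTwo_apply (hσ : ∀ a, rhoTwo N (σ a) = rhoTwo N a) (a : Fin N) :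
    σ a.rev = (σ a).rev := by
  have hrev : rhoTwo N (σ a.rev) = rhoTwo N (σ a).rev := by simp only [hσ, rhoTwo_rev]
  rcases rhoTwo_eq_rhoTwo_iff.1 hrev with h | ⟨-, h⟩
  · exact h
  · have ha : a = a.rev := σ.injective (Fin.rev_injective h)
    have hfix : σ a = a := by
      rcases rhoTwo_eq_rhoTwo_iff.1 (hσ a) with h | ⟨-, h⟩
      · exact h
      · rw [← Fin.rev_eq_iff.2 h, ← ha]
    rw [← ha, hfix, ← ha]

theorem apply_lt_apply_iff_of_rhoTwo_apply (hσ : ∀ a, rhoTwo N (σ a) = rhoTwo N a) {a b : Fin N}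
    (h : rhoTwo N a = 0 → b ≠ a.rev) : σ a < σ b ↔ a < b := by
  have hσab : rhoTwo N (σ a) = 0 → σ b ≠ (σ a).rev := by
    rwa [hσ, ← apply_rev_of_rhoTwo_apply hσ, σ.injective.ne_iff]
  rw [lt_iff_rhoTwo_lt_rhoTwo hσab, lt_iff_rhoTwo_lt_rhoTwo h, hσ, hσ]

theorem qMetric_submatrix (p : ℂ) (hσ : ∀ a, rhoTwo N (σ a) = rhoTwo N a) :
    (qMetric N p).submatrix σ σ = qMetric N p := by
  ext a b
  simp [qMetric, hσ, ← apply_rev_of_rhoTwo_apply hσ]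

theorem qRmat_submatrix (p : ℂ) (hσ : ∀ a, rhoTwo N (σ a) = rhoTwo N a) :
    (qRmat N p).submatrix (Prod.map σ σ) (Prod.map σ σ) = qRmat N p := by
  ext ⟨a, b⟩ ⟨c, d⟩
  have lt_iff {x : Fin N} (h : a.rev ≠ x) : σ x < σ a ↔ x < a :=
    apply_lt_apply_iff_of_rhoTwo_apply hσ fun _ hax => h (Fin.rev_eq_iff.2 hax)
  have hflip : σ b < σ a ∧ a.rev ≠ b ∧ c = b ∧ d = a ↔ b < a ∧ a.rev ≠ b ∧ c = b ∧ d = a := by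
    grind
  have hpair : b = a.rev ∧ σ c < σ a ∧ a.rev ≠ c ∧ d = c.rev ↔
      b = a.rev ∧ c < a ∧ a.rev ≠ c ∧ d = c.rev := by
    grind
  simp only [qRmat, Matrix.submatrix_apply, Matrix.of_apply, Prod.map_apply, Prod.mk.injEq, hσ,
    ← apply_rev_of_rhoTwo_apply hσ, σ.injective.eq_iff, σ.injective.ne_iff, hflip, hpair]
  by_cases ha : rhoTwo N a = 0
  · by_cases hc : c = a.rev <;> simp [ha, hc]
  · have hrev : σ a.rev < σ a ↔ a.rev < a :=
      apply_lt_apply_iff_of_rhoTwo_apply hσ fun h0 => absurd (by simpa [rhoTwo_rev] using h0) ha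
    simp only [hrev]

theorem commute_permMatrix_qMetric (p : ℂ) (hσ : ∀ a, rhoTwo N (σ a) = rhoTwo N a) :
    Commute (σ.permMatrix ℂ) (qMetric N p) :=
  commute_permMatrix_iff.2 (qMetric_submatrix p hσ)

theorem commute_permMatrix_kronecker_qRmat (p : ℂ) (hσ : ∀ a, rhoTwo N (σ a) = rhoTwo N a) :
    Commute (σ.permMatrix ℂ ⊗ₖ σ.permMatrix ℂ) (qRmat N p) := by
  rw [permMatrix_kronecker_permMatrix]
  exact commute_permMatrix_iff.2 (qRmat_submatrix p hσ)

theorem qMetric_mul_self {p : ℂ} (hp : p ≠ 0) : qMetric N p * qMetric N p = 1 := by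
  ext a b
  simp only [Matrix.mul_apply, qMetric, Matrix.of_apply, ite_mul, zero_mul, Finset.sum_ite_eq',
    Finset.mem_univ, if_true, Fin.rev_rev, rhoTwo_rev, Matrix.one_apply]
  by_cases h : b = a
  · simp [h, zpow_ne_zero _ hp]
  · simp [h, Ne.symm h]

end Rho

/-- Let `N = 2n` be even and let `D` be the identity matrix except that
the indices `n` and `n+1` (1-indexed) are exchanged.  Then (i) `D² = 1`; (ii)
`R · (D ⊗ D) = (D ⊗ D) · R`; (iii) `Dᵗ C D = C` and `D C Dᵗ = C`; (iv)
`Cᵗ D Cᵗ = D`, which (`D` being real) is the reality condition `conj D = Cᵗ D Cᵗ`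
ensuring that the involutive automorphism `T ↦ D T D⁻¹` commutes with the compact
conjugation of `SO_q(N)`. -/
theorem exchange_matrix_properties (n : ℕ) (hn : 2 ≤ n) (p : ℂ) (hp : p ≠ 0) :
    ∀ D : Matrix (Fin (2 * n)) (Fin (2 * n)) ℂ,
      D = Matrix.of (fun a b : Fin (2 * n) =>
        if a.1 + 1 = n ∧ b.1 + 1 = n + 1 then 1
        else if a.1 + 1 = n + 1 ∧ b.1 + 1 = n then 1
        else if a = b ∧ a.1 + 1 ≠ n ∧ a.1 + 1 ≠ n + 1 then 1
        else 0) →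
      D * D = 1 ∧
      qRmat (2 * n) p * (D ⊗ₖ D) = (D ⊗ₖ D) * qRmat (2 * n) p ∧
      Dᵀ * qMetric (2 * n) p * D = qMetric (2 * n) p ∧
      D * qMetric (2 * n) p * Dᵀ = qMetric (2 * n) p ∧
      (qMetric (2 * n) p)ᵀ * D * (qMetric (2 * n) p)ᵀ = D := by
  rintro D hD
  obtain ⟨i, hi⟩ : ∃ i : Fin (2 * n), i.1 + 1 = n := ⟨⟨n - 1, by omega⟩, by grind⟩
  obtain ⟨j, hj⟩ : ∃ j : Fin (2 * n), j.1 + 1 = n + 1 := ⟨⟨n, by omega⟩, rfl⟩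
  obtain rfl : D = Matrix.swap ℂ i j := by
    ext a b
    simp only [hD, Matrix.of_apply, matrix_swap_apply]
    grind
  have hρ := Equiv.apply_swap_eq_self <|
    (rhoTwo_two_mul_eq_zero_iff.2 (.inl hi)).trans (rhoTwo_two_mul_eq_zero_iff.2 (.inr hj)).symm
  have hDD := Matrix.swap_mul_self (R := ℂ) i j
  have hDC : Commute (Matrix.swap ℂ i j) (qMetric (2 * n) p) := commute_permMatrix_qMetric p hρ
  have hDCD : Matrix.swap ℂ i j * qMetric (2 * n) p * Matrix.swap ℂ i j = qMetric (2 * n) p := by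
    rw [hDC.eq, mul_assoc, hDD, mul_one]
  have hCDC : qMetric (2 * n) p * Matrix.swap ℂ i j * qMetric (2 * n) p = Matrix.swap ℂ i j := by
    rw [← hDC.eq, mul_assoc, qMetric_mul_self hp, mul_one]
  rw [Matrix.transpose_swap]
  refine ⟨hDD, (commute_permMatrix_kronecker_qRmat p hρ).eq.symm, hDCD, hDCD, ?_⟩
  simpa only [Matrix.transpose_mul, Matrix.transpose_swap, ← mul_assoc] using
    congrArg Matrix.transpose hCDC
end
end

section
/- Let N = 2n be even and define M ∈ M_N(ℂ) by: M_{ab} = (1/√2)(δ_{ab} + δ_{a,b′}) for a ≤ n−1; M_{n,n} = M_{n,n+1} = 1/√2; M_{n+1,n} = −1/√2, M_{n+1,n+1} = 1/√2; and M_{ab} = (1/√2)(i δ_{a,b′} − i δ_{ab}) for a ≥ n+2 (all other entries zero). Then M is invertible and (M⁻¹)ᵗ J M⁻¹ is a real diagonal matrix with exactly one diagonal entry equal to −1 and the remaining N−1 diagonal entries equal to +1, i.e. the q = 1 metric acquires Lorentzian signature (N−1, 1). This identifies the real form associated to the conjugation ∗♯ (the compact conjugation composed with the involutive automorphism given by the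 index-exchange matrix) as the q-Lorentz group SO_q(N−1, 1). -/
noncomputable section

open Matrix

/-- The `q = 1` quantum metric of `SO_q(N)`: `J_{ab} = δ_{a,b′}` with `a′ = N+1−a`
(`Fin.rev` in the 0-indexed encoding). -/
def Jmet (N : ℕ) : Matrix (Fin N) (Fin N) ℂ :=
  Matrix.of fun a b => if b = a.rev then 1 else 0

/-!
Row `a` of `M` has the form `s (α a • e_a + β a • e_{a′})` with `s² = 1/2`. As `J` pairs `e_a` with
`e_{a′}` only, the rows `a` and `b` of such a matrix are `J`-orthogonal unless `b = a` or `b = a′`.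
Row `a` has square `2 s² α a β a`, which is the required sign, and rows `a` and `a′` are orthogonal
because `α a α a′ + β a β a′ = 0`: of the two pairs `(α, β)` at `a` and `a′`, one is `(1, 1)` and
the other is `(1, -1)` or `(-i, i)`. Hence `M J Mᵀ = D`, the required diagonal matrix, and since `J`
and `D` are their own inverses, inverting both sides gives `(M⁻¹)ᵀ J M⁻¹ = D`.
-/

section Congruence

variable {m R : Type*} [Fintype m] [DecidableEq m]

section CommRing

variable [CommRing R]

theorem inv_transpose_mul_inv_mul_inv (A B : Matrix m m R) :
    (A⁻¹)ᵀ * B⁻¹ * A⁻¹ = (A * B * Aᵀ)⁻¹ := by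
  rw [Matrix.mul_inv_rev, Matrix.mul_inv_rev, Matrix.transpose_nonsing_inv, Matrix.mul_assoc]

theorem isUnit_det_of_isUnit_det_mul_mul_transpose {A B : Matrix m m R}
    (h : IsUnit (A * B * Aᵀ).det) : IsUnit A.det := by
  rw [Matrix.det_mul, Matrix.det_mul, mul_assoc] at h
  exact isUnit_of_mul_isUnit_left h

theorem inv_transpose_mul_mul_inv_of_mul_self_eq_one {A B D : Matrix m m R} (hB : B * B = 1)
    (hD : D * D = 1) (h : A * B * Aᵀ = D) : (A⁻¹)ᵀ * B * A⁻¹ = D :=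
  calc (A⁻¹)ᵀ * B * A⁻¹
    _ = (A⁻¹)ᵀ * B⁻¹ * A⁻¹ := by rw [Matrix.inv_eq_right_inv hB]
    _ = (A * B * Aᵀ)⁻¹ := inv_transpose_mul_inv_mul_inv A B
    _ = D := by rw [h, Matrix.inv_eq_right_inv hD]

end CommRing

theorem permMatrix_mul_diagonal [NonAssocSemiring R] (σ : Equiv.Perm m) (d : m → R) :
    σ.permMatrix R * diagonal d = diagonal (d ∘ σ) * σ.permMatrix R := by
  ext i j
  rcases eq_or_ne (σ i) j with rfl | h
  · simp [PEquiv.toMatrix_apply]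
  · simp [PEquiv.toMatrix_apply, h]

theorem permMatrix_mul_self [NonAssocSemiring R] {σ : Equiv.Perm m} (hσ : σ * σ = 1) :
    σ.permMatrix R * σ.permMatrix R = 1 := by
  rw [← Matrix.permMatrix_mul, hσ, Matrix.permMatrix_one]

theorem diagonal_add_mul_permMatrix_mul_transpose [CommSemiring R] {σ : Equiv.Perm m}
    (hσ : σ * σ = 1) (α β : m → R) :
    (diagonal α + diagonal β * σ.permMatrix R) * σ.permMatrix R *
        (diagonal α + diagonal β * σ.permMatrix R)ᵀ =
      (2 : R) • diagonal (α * β) +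
        diagonal (α * (α ∘ σ) + β * (β ∘ σ)) * σ.permMatrix R := by
  have hP := permMatrix_mul_self (R := R) hσ
  have hPt : (σ.permMatrix R)ᵀ = σ.permMatrix R := by
    rw [Matrix.transpose_permMatrix, inv_eq_of_mul_eq_one_left hσ]
  have hcomm := permMatrix_mul_diagonal (R := R) σ
  have hmul (u v : m → R) : diagonal u * diagonal v = diagonal (u * v) :=
    Matrix.diagonal_mul_diagonal u v
  have hadd (u v : m → R) : diagonal u + diagonal v = diagonal (u + v) :=
    Matrix.diagonal_add u v
  rw [Matrix.transpose_add, Matrix.transpose_mul, hPt, Matrix.diagonal_transpose,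
    Matrix.diagonal_transpose]
  generalize σ.permMatrix R = P at *
  calc (diagonal α + diagonal β * P) * P * (diagonal α + P * diagonal β)
    _ = diagonal α * (P * P) * diagonal β + diagonal β * (P * P) * diagonal α +
          (diagonal α * (P * diagonal α) + diagonal β * (P * P) * (P * diagonal β)) := by
        simp only [add_mul, mul_add, Matrix.mul_assoc]
        abel
    _ = diagonal (α * β) + diagonal (β * α) +
          (diagonal (α * (α ∘ σ)) + diagonal (β * (β ∘ σ))) * P := by
        simp only [hP, hcomm, Matrix.mul_one, ← Matrix.mul_assoc, add_mul]
        simp only [hmul]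
    _ = (2 : R) • diagonal (α * β) + diagonal (α * (α ∘ σ) + β * (β ∘ σ)) * P := by
        rw [mul_comm β α, two_smul, hadd (α * (α ∘ σ))]

end Congruence

theorem Jmet_eq_permMatrix (N : ℕ) : Jmet N = Fin.revPerm.permMatrix ℂ := by
  ext a b
  simp [Jmet, eq_comm (a := b)]

theorem revPerm_mul_self (N : ℕ) : (Fin.revPerm : Equiv.Perm (Fin N)) * Fin.revPerm = 1 :=
  Equiv.ext Fin.rev_rev

theorem Jmet_mul_self (N : ℕ) : Jmet N * Jmet N = 1 := by
  rw [Jmet_eq_permMatrix, permMatrix_mul_self (revPerm_mul_self N)]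

/-- The diagonal of the Lorentzian metric; the time-like index `n + 1` is `n` when counted
from `0`. -/
def lorentzSign (n : ℕ) (a : Fin (2 * n)) : ℂ :=
  if a.1 = n then -1 else 1

/-- The coefficient of `e_a` in row `a` of `√2 M`, for the matrix `M` of the Lorentz basis. -/
def lorentzCoeff (n : ℕ) (a : Fin (2 * n)) : ℂ :=
  if a.1 ≤ n then 1 else -Complex.I

/-- The coefficient of `e_{a′}` in row `a` of `√2 M`, for the matrix `M` of the Lorentz basis. -/
def lorentzRevCoeff (n : ℕ) (a : Fin (2 * n)) : ℂ :=
  if a.1 < n then 1 else if a.1 = n then -1 else Complex.I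

/-- The matrix `M` whose rows are the Lorentz basis, as a diagonal plus an antidiagonal matrix. -/
def lorentzMatrix (n : ℕ) : Matrix (Fin (2 * n)) (Fin (2 * n)) ℂ :=
  (Real.sqrt 2 : ℂ)⁻¹ •
    (diagonal (lorentzCoeff n) + diagonal (lorentzRevCoeff n) * Jmet (2 * n))

theorem lorentzMatrix_apply (n : ℕ) (a b : Fin (2 * n)) :
    lorentzMatrix n a b = (Real.sqrt 2 : ℂ)⁻¹ *
      (lorentzCoeff n a * (if b = a then 1 else 0) +
        lorentzRevCoeff n a * (if b = a.rev then 1 else 0)) := by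
  simp [lorentzMatrix, Jmet, Matrix.diagonal_apply, eq_comm (a := a)]

theorem diagonal_lorentzSign_mul_self (n : ℕ) :
    diagonal (lorentzSign n) * diagonal (lorentzSign n) = 1 := by
  rw [Matrix.diagonal_mul_diagonal, ← Matrix.diagonal_one]
  congr 1
  ext a
  unfold lorentzSign
  split_ifs <;> norm_num

theorem lorentzCoeff_mul_lorentzRevCoeff (n : ℕ) (a : Fin (2 * n)) :
    lorentzCoeff n a * lorentzRevCoeff n a = lorentzSign n a := by
  unfold lorentzCoeff lorentzRevCoeff lorentzSign
  rcases lt_trichotomy a.1 n with h | h | h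
  · simp [h, h.le, h.ne]
  · simp [h]
  · simp [h.not_ge, h.not_gt, h.ne']

theorem lorentzCoeff_mul_rev_add_lorentzRevCoeff_mul_rev (n : ℕ) (a : Fin (2 * n)) :
    lorentzCoeff n a * lorentzCoeff n a.rev +
      lorentzRevCoeff n a * lorentzRevCoeff n a.rev = 0 := by
  unfold lorentzCoeff lorentzRevCoeff
  have ha := a.2
  simp only [Fin.val_rev]
  split_ifs <;> first | omega | simp

theorem inv_sqrt_two_mul_self : (Real.sqrt 2 : ℂ)⁻¹ * (Real.sqrt 2 : ℂ)⁻¹ = 2⁻¹ := by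
  rw [← mul_inv, ← Complex.ofReal_mul, Real.mul_self_sqrt zero_le_two, Complex.ofReal_ofNat]

theorem lorentzMatrix_mul_Jmet_mul_transpose (n : ℕ) :
    lorentzMatrix n * Jmet (2 * n) * (lorentzMatrix n)ᵀ = diagonal (lorentzSign n) := by
  have hsign : lorentzCoeff n * lorentzRevCoeff n = lorentzSign n :=
    funext (lorentzCoeff_mul_lorentzRevCoeff n)
  have hrev : lorentzCoeff n * (lorentzCoeff n ∘ Fin.revPerm) +
      lorentzRevCoeff n * (lorentzRevCoeff n ∘ Fin.revPerm) = 0 :=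
    funext (lorentzCoeff_mul_rev_add_lorentzRevCoeff_mul_rev n)
  rw [lorentzMatrix, Matrix.transpose_smul, Matrix.smul_mul, Matrix.smul_mul, Matrix.mul_smul,
    smul_smul, inv_sqrt_two_mul_self, Jmet_eq_permMatrix,
    diagonal_add_mul_permMatrix_mul_transpose (revPerm_mul_self _), hsign, hrev]
  simp

/-- For `N = 2n` even, the matrix `M` with
`M_{ab} = (1/√2)(δ_{ab} + δ_{a,b′})` for `a ≤ n−1`,
`M_{n,n} = M_{n,n+1} = 1/√2`, `M_{n+1,n} = −1/√2`, `M_{n+1,n+1} = 1/√2`, and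
`M_{ab} = (1/√2)(i δ_{a,b′} − i δ_{ab})` for `a ≥ n+2` (all other entries zero) is
invertible, and `(M⁻¹)ᵗ J M⁻¹` is a real diagonal matrix with exactly one diagonal
entry `−1` (at position `n+1`) and the remaining `N−1` entries `+1`: the `q = 1`
metric acquires Lorentzian signature `(N−1, 1)`, identifying the real form associated
to the conjugation `∗♯` as the `q`-Lorentz group `SO_q(N−1, 1)`. -/
theorem lorentz_basis_even (n : ℕ) (hn : 2 ≤ n) :
    ∀ M : Matrix (Fin (2 * n)) (Fin (2 * n)) ℂ,
      M = Matrix.of (fun a b : Fin (2 * n) =>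
        if a.1 + 1 ≤ n then
          ((Real.sqrt 2 : ℂ))⁻¹ *
            ((if b = a then 1 else 0) + (if b = a.rev then 1 else 0))
        else if a.1 + 1 = n + 1 then
          ((Real.sqrt 2 : ℂ))⁻¹ *
            ((if b = a then 1 else 0) - (if b = a.rev then 1 else 0))
        else
          ((Real.sqrt 2 : ℂ))⁻¹ *
            (Complex.I * (if b = a.rev then 1 else 0) -
              Complex.I * (if b = a then 1 else 0))) →
      IsUnit M.det ∧
      (M⁻¹)ᵀ * Jmet (2 * n) * M⁻¹ =
        Matrix.diagonal (fun a : Fin (2 * n) =>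
          if a.1 + 1 = n + 1 then (-1 : ℂ) else 1) := by
  intro M hM
  have hM' : M = lorentzMatrix n := by
    ext a b
    rw [hM, Matrix.of_apply, lorentzMatrix_apply, lorentzCoeff, lorentzRevCoeff]
    split_ifs <;> first | omega | ring
  have hsign :
      (fun a : Fin (2 * n) => if a.1 + 1 = n + 1 then (-1 : ℂ) else 1) = lorentzSign n := by
    simp only [Nat.add_right_cancel_iff, lorentzSign, funext_iff, implies_true]
  have hD := diagonal_lorentzSign_mul_self n
  have hgram := lorentzMatrix_mul_Jmet_mul_transpose n
  rw [hM', hsign]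
  constructor
  · apply isUnit_det_of_isUnit_det_mul_mul_transpose (B := Jmet (2 * n))
    rw [hgram]
    exact Matrix.isUnit_det_of_right_inverse hD
  · exact inv_transpose_mul_mul_inv_of_mul_self_eq_one (Jmet_mul_self _) hD hgram
end
end

section
/- Let N = 2n be even, fix signs ε_j ∈ {+1, −1} with ε_{j′} = −ε_j for all j, let D″ = i · diag(ε_1, …, ε_{2n}), and let A = diag(e^{−iε_1π/4}, …, e^{−iε_{2n}π/4}). Then A_{aa} · A_{a′a′} = 1 for all a (so A is a quantum orthogonal matrix, satisfying the RTT relation with R and Aᵗ C A = C), and D″ · A = conj(A), the entrywise complex conjugate of A. Consequently the automorphism α(T) = A T A⁻¹ intertwines the conjugation T ↦ D″ T D″⁻¹ composed with the trivial conjugation with the trivial conjugation itself, proving their equivalence. -/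
noncomputable section

open Matrix Kronecker

/-!
The nonzero entries `R^{ab}_{cd}` have either `{c, d} = {a, b}` or `b = a′` and `d = c′`, so `R`
preserves the weight `d_a d_b` as soon as `d_a d_{a′}` is constant; the metric `C` pairs `a` with
`a′` only. For `d_a = e^{−iε_aπ/4}` the constant is `1` because `ε_{a′} = −ε_a`. Finally
`i s = e^{isπ/2}` for a sign `s`, and multiplying by it turns `e^{−isπ/4}` into its conjugate.
-/

lemma mul_diagonal_eq_diagonal_mul_of_ne_zero {ι R : Type*} [Fintype ι] [DecidableEq ι]
    [NonUnitalNonAssocCommSemiring R] {M : Matrix ι ι R} {d : ι → R}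
    (h : ∀ i j, M i j ≠ 0 → d i = d j) : M * diagonal d = diagonal d * M := by
  ext i j
  rw [mul_diagonal, diagonal_mul, mul_comm]
  by_cases hM : M i j = 0
  · rw [hM, mul_zero, mul_zero]
  · rw [h i j hM]

section Diagonal

variable {N : ℕ} {d : Fin N → ℂ} {c : ℂ}

lemma eq_or_eq_swap_or_eq_rev_of_qRmat_ne_zero {p : ℂ} {x y : Fin N × Fin N}
    (h : qRmat N p x y ≠ 0) :
    y = x ∨ y = x.swap ∨ (x.2 = x.1.rev ∧ y.2 = y.1.rev) := by
  simp only [qRmat, of_apply] at h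
  split_ifs at h <;> grind

lemma qRmat_mul_kronecker_diagonal (p : ℂ) (hd : ∀ a, d a * d a.rev = c) :
    qRmat N p * (diagonal d ⊗ₖ diagonal d) = (diagonal d ⊗ₖ diagonal d) * qRmat N p := by
  rw [diagonal_kronecker_diagonal]
  refine mul_diagonal_eq_diagonal_mul_of_ne_zero fun x y hxy => ?_
  rcases eq_or_eq_swap_or_eq_rev_of_qRmat_ne_zero hxy with rfl | rfl | ⟨hx, hy⟩
  · rfl
  · exact mul_comm _ _
  · rw [hx, hy, hd, hd]

lemma transpose_diagonal_mul_qMetric_mul_diagonal (p : ℂ) (hd : ∀ a, d a * d a.rev = c) :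
    (diagonal d)ᵀ * qMetric N p * diagonal d = c • qMetric N p := by
  ext a b
  rw [diagonal_transpose, mul_diagonal, diagonal_mul, Matrix.smul_apply, smul_eq_mul]
  by_cases hb : b = a.rev
  · rw [hb, mul_right_comm, hd]
  · simp [qMetric, hb]

end Diagonal

/-- The phase `e^{−izπ/4}`, an eighth of a turn when `z = ±1`; the diagonal entries of `A` are
its values at the signs `ε_a`. -/
def eighthTurn (z : ℂ) : ℂ := Complex.exp (-Complex.I * z * (Real.pi : ℂ) / 4)

lemma eighthTurn_mul_eighthTurn_neg (z : ℂ) : eighthTurn z * eighthTurn (-z) = 1 := by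
  rw [eighthTurn, eighthTurn, ← Complex.exp_add, ← Complex.exp_zero]
  ring_nf

lemma conj_eighthTurn (z : ℂ) :
    starRingEnd ℂ (eighthTurn z) = eighthTurn (-starRingEnd ℂ z) := by
  rw [eighthTurn, eighthTurn, ← Complex.exp_conj]
  simp [Complex.conj_ofNat]

lemma I_mul_sign_eq_exp {s : ℝ} (hs : s = 1 ∨ s = -1) :
    Complex.I * (s : ℂ) = Complex.exp (Complex.I * (s : ℂ) * (Real.pi : ℂ) / 2) := by
  rw [show Complex.I * (s : ℂ) * (Real.pi : ℂ) / 2 = (s : ℂ) * (Real.pi / 2 * Complex.I) by ring]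
  rcases hs with rfl | rfl
  · simp [Complex.exp_pi_div_two_mul_I]
  · simp [Complex.exp_neg, Complex.exp_pi_div_two_mul_I]

lemma I_mul_sign_mul_eighthTurn {s : ℝ} (hs : s = 1 ∨ s = -1) :
    Complex.I * (s : ℂ) * eighthTurn s = starRingEnd ℂ (eighthTurn s) := by
  rw [conj_eighthTurn, Complex.conj_ofReal, I_mul_sign_eq_exp hs, eighthTurn, eighthTurn,
    ← Complex.exp_add]
  ring_nf

/-- Let `N = 2n` be even, fix signs `ε_j ∈ {+1,−1}` with
`ε_{j′} = −ε_j`, let `D″ = i · diag(ε_1, …, ε_{2n})` and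
`A = diag(e^{−iε_1π/4}, …, e^{−iε_{2n}π/4})`.  Then `A_{aa} · A_{a′a′} = 1` for all
`a` (so `A` is a quantum orthogonal matrix: `R·(A⊗A) = (A⊗A)·R` and `Aᵗ C A = C`),
and `D″ · A = conj A`.  Consequently the automorphism `α(T) = A T A⁻¹` intertwines
the conjugation built from `D″` with the trivial conjugation, proving their
equivalence. -/
theorem Dpp_A_intertwiner (n : ℕ) (hn : 2 ≤ n) (p : ℂ) (hp : p ≠ 0)
    (ε : Fin (2 * n) → ℝ) (hε : ∀ a, ε a = 1 ∨ ε a = -1)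
    (hanti : ∀ a : Fin (2 * n), ε a.rev = -ε a) :
    ∀ D A : Matrix (Fin (2 * n)) (Fin (2 * n)) ℂ,
      D = Matrix.diagonal (fun a => Complex.I * (ε a : ℂ)) →
      A = Matrix.diagonal (fun a =>
            Complex.exp (-Complex.I * (ε a : ℂ) * (Real.pi : ℂ) / 4)) →
      (∀ a : Fin (2 * n), A a a * A a.rev a.rev = 1) ∧
      qRmat (2 * n) p * (A ⊗ₖ A) = (A ⊗ₖ A) * qRmat (2 * n) p ∧
      Aᵀ * qMetric (2 * n) p * A = qMetric (2 * n) p ∧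
      D * A = A.map (starRingEnd ℂ) := by
  rintro D A rfl rfl
  have hd : ∀ a, eighthTurn (ε a) * eighthTurn (ε a.rev) = 1 := fun a => by
    rw [hanti, Complex.ofReal_neg, eighthTurn_mul_eighthTurn_neg]
  refine ⟨fun a => ?_, qRmat_mul_kronecker_diagonal p hd, ?_, ?_⟩
  · rw [diagonal_apply_eq, diagonal_apply_eq]
    exact hd a
  · exact (transpose_diagonal_mul_qMetric_mul_diagonal p hd).trans (one_smul ℂ _)
  · rw [diagonal_mul_diagonal, diagonal_map (map_zero _)]
    exact congrArg diagonal (funext fun a => I_mul_sign_mul_eighthTurn (hε a))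
end
end
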